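/- Localization bounds for the fixed point (second part of Theorem 2.3): Set γ := ‖Q‖_{(d+1)/2,ℤ^k} and δ := ‖Q‖_{d+1,ℤ^k∖{0}}, and suppose (γ, δ) ∈ G_d. Then the equation ε = γ ε^d + δ has a smallest positive solution ε* = ε*(γ,δ), it satisfies γ (ε*)^{d−1} < 1, and the fixed point x of T from the good-set regime (the unique fixed point in the ε-ball for a good-set witness ε) satisfies (δ (1 − δ (ε*)^d)/(1 + γ (ε*)^{d−1}))^{d+1} ≤ ‖x‖_{d+1,ℤ^k∖{0}}^{d+1} ≤ (δ (1 + δ (ε*)^d)/(1 − γ (ε*)^{d−1}))^{d+1}. (The quantity ‖x‖_{d+1,ℤ^k∖{0}}^{d+1} equals the ratio μ_0(σ_0 ≠ 0)/μ_0(σ_0 = 0) of the associated Gibbs measure.) -/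

import Mathlib

/-!
Let `X` be the `ℓ^{d+1}` norm of a fixed point `x` and `A = ∑ Q(j) x(j)^d`, so that
`(1 + A) x(i) = Q(i) + (Q * x^d)(i)` for `i ≠ 0`. All terms are nonnegative. Young's convolution
inequality `‖Q * x^d‖_{d+1} ≤ ‖Q‖_{(d+1)/2} ‖x^d‖_{(d+1)/d} = γ X^d` and Minkowski's inequality give
`X ≤ δ + γ X^d`; dropping the convolution and bounding `A ≤ δ X^d` by Hölder gives
`δ ≤ (1 + δ X^d) X`.

If `ε` is a good-set witness, `e ↦ e - γ e^d` is strictly increasing on `[0, ε]`, so it takes the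
value `δ` there exactly once, at `ε*`, and `X ≤ ε` together with `X ≤ δ + γ X^d` forces `X ≤ ε*`.
Since `ε* = δ / (1 - γ ε*^{d-1})`, this is more than the upper bound, and
`X ≥ δ / (1 + δ ε*^d) ≥ δ (1 - δ ε*^d)` is more than the lower one.
-/

open scoped BigOperators
open Filter Topology

noncomputable section

/-- The integer lattice `ℤ^k`. -/
abbrev ZkL (k : ℕ) := Fin k → ℤ

/-- The punctured integer lattice `ℤ^k ∖ {0}`, as a subtype. -/
abbrev ZkP (k : ℕ) := {j : ZkL k // j ≠ 0}

/-- The `p`-norm `‖x‖_{p, ℤ^k}` of a function on all of `ℤ^k`. -/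
noncomputable def normFull (k : ℕ) (p : ℝ) (x : ZkL k → ℝ) : ℝ :=
  (∑' j : ZkL k, |x j| ^ p) ^ (1 / p)

/-- The `p`-norm `‖x‖_{p, ℤ^k ∖ {0}}` of a function on `ℤ^k`, restricted to nonzero sites. -/
noncomputable def normPunct (k : ℕ) (p : ℝ) (x : ZkL k → ℝ) : ℝ :=
  (∑' j : ZkP k, |x j.1| ^ p) ^ (1 / p)

/-- The `p`-norm of a function defined on `ℤ^k ∖ {0}`. -/
noncomputable def norm0 (k : ℕ) (p : ℝ) (x : ZkP k → ℝ) : ℝ :=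
  (∑' j : ZkP k, |x j| ^ p) ^ (1 / p)

/-- `γ := ‖Q‖_{(d+1)/2, ℤ^k}`. -/
noncomputable def gam (k d : ℕ) (Q : ZkL k → ℝ) : ℝ := normFull k (((d : ℝ) + 1) / 2) Q

/-- `δ := ‖Q‖_{d+1, ℤ^k ∖ {0}}`. -/
noncomputable def del (k d : ℕ) (Q : ZkL k → ℝ) : ℝ := normPunct k ((d : ℝ) + 1) Q

/-- Membership in `D`: an element of `ℓ^{d+1}(ℤ^k ∖ {0})` with nonnegative entries. -/
def memD (k d : ℕ) (x : ZkP k → ℝ) : Prop :=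
  Summable (fun j : ZkP k => |x j| ^ ((d : ℝ) + 1)) ∧ ∀ j : ZkP k, 0 ≤ x j

/-- The operator `T`:
`T(x)(i) = (Q(i) + Σ_{j≠0} Q(i−j) x(j)^d) / (1 + Σ_{j≠0} Q(j) x(j)^d)`. -/
noncomputable def opT (k d : ℕ) (Q : ZkL k → ℝ) (x : ZkP k → ℝ) (i : ZkL k) : ℝ :=
  (Q i + ∑' j : ZkP k, Q (i - j.1) * x j ^ d) /
  (1 + ∑' j : ZkP k, Q j.1 * x j ^ d)

/-- The good set `G_d`. -/
def goodSet (d : ℕ) : Set (ℝ × ℝ) :=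
  {gd | 1 < gd.1 ∧ 0 < gd.2 ∧ ∃ ε > 0,
    gd.2 + gd.1 * ε ^ d ≤ ε ∧
    2 * d * gd.1 * ε ^ (d - 1) + 2 * d * gd.2 * ε ^ d < 1}

open scoped ENNReal

/-- The `ℓ^p` norm of an `ℝ≥0∞`-valued family over an arbitrary index type; it is `∞` for a family
that is not `p`-summable. -/
def eellNorm {ι : Type*} (p : ℝ) (f : ι → ℝ≥0∞) : ℝ≥0∞ := (∑' i, f i ^ p) ^ (1 / p)

section ENNRealNorm

variable {ι κ : Type*} {p q r : ℝ}

lemma eellNorm_rpow (hp : p ≠ 0) (f : ι → ℝ≥0∞) : eellNorm p f ^ p = ∑' i, f i ^ p := by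
  rw [eellNorm, ← ENNReal.rpow_mul, one_div_mul_cancel hp, ENNReal.rpow_one]

lemma eellNorm_le_iff (hp : 0 < p) {f : ι → ℝ≥0∞} {C : ℝ≥0∞} :
    eellNorm p f ≤ C ↔ ∑' i, f i ^ p ≤ C ^ p := by
  rw [← eellNorm_rpow hp.ne', ENNReal.rpow_le_rpow_iff hp]

lemma eellNorm_mono (hp : 0 ≤ p) {f g : ι → ℝ≥0∞} (h : ∀ i, f i ≤ g i) :
    eellNorm p f ≤ eellNorm p g :=
  ENNReal.rpow_le_rpow (ENNReal.tsum_le_tsum fun i => ENNReal.rpow_le_rpow (h i) hp)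
    (one_div_nonneg.2 hp)

lemma eellNorm_const_mul (hp : 0 < p) (c : ℝ≥0∞) (f : ι → ℝ≥0∞) :
    eellNorm p (fun i => c * f i) = c * eellNorm p f := by
  simp only [eellNorm, ENNReal.mul_rpow_of_nonneg _ _ hp.le, ENNReal.tsum_mul_left]
  rw [ENNReal.mul_rpow_of_nonneg _ _ (one_div_nonneg.2 hp.le), ← ENNReal.rpow_mul,
    mul_one_div_cancel hp.ne', ENNReal.rpow_one]

lemma eellNorm_pow {n : ℕ} (hn : n ≠ 0) (p : ℝ) (f : ι → ℝ≥0∞) :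
    eellNorm p (fun i => f i ^ n) = eellNorm (n * p) f ^ n := by
  have hn' : (n : ℝ) ≠ 0 := Nat.cast_ne_zero.2 hn
  simp only [eellNorm, ← ENNReal.rpow_natCast_mul]
  rw [← ENNReal.rpow_mul_natCast]
  congr 1
  field_simp

lemma eellNorm_comp_le_of_injective (hp : 0 ≤ p) {e : κ → ι} (he : Function.Injective e)
    (f : ι → ℝ≥0∞) : eellNorm p (fun k => f (e k)) ≤ eellNorm p f :=
  ENNReal.rpow_le_rpow (ENNReal.tsum_comp_le_tsum_of_injective he fun i => f i ^ p)
    (one_div_nonneg.2 hp)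

lemma eellNorm_add_le (hp : 1 ≤ p) (f g : ι → ℝ≥0∞) :
    eellNorm p (fun i => f i + g i) ≤ eellNorm p f + eellNorm p g := by
  let _ : MeasurableSpace ι := ⊤
  simpa only [MeasureTheory.lintegral_count, Pi.add_apply] using!
    ENNReal.lintegral_Lp_add_le (μ := MeasureTheory.Measure.count) (f := f) (g := g)
      measurable_from_top.aemeasurable measurable_from_top.aemeasurable hp

lemma tsum_mul_le_eellNorm_mul_eellNorm (hpq : p.HolderConjugate q) (f g : ι → ℝ≥0∞) :
    ∑' i, f i * g i ≤ eellNorm p f * eellNorm q g := by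
  let _ : MeasurableSpace ι := ⊤
  simpa only [MeasureTheory.lintegral_count, Pi.mul_apply] using!
    ENNReal.lintegral_mul_le_Lp_mul_Lq MeasureTheory.Measure.count hpq (f := f) (g := g)
      measurable_from_top.aemeasurable measurable_from_top.aemeasurable

lemma tsum_prod_rpow_le (s : Finset κ) {w : κ → ℝ} (hw : ∑ k ∈ s, w k = 1)
    (hw₀ : ∀ k ∈ s, 0 ≤ w k) (f : κ → ι → ℝ≥0∞) :
    ∑' i, ∏ k ∈ s, f k i ^ w k ≤ ∏ k ∈ s, (∑' i, f k i) ^ w k := by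
  let _ : MeasurableSpace ι := ⊤
  simpa only [MeasureTheory.lintegral_count] using
    ENNReal.lintegral_prod_norm_pow_le (μ := MeasureTheory.Measure.count) s (f := f)
      (fun _ _ => measurable_from_top.aemeasurable) hw hw₀

-- Hölder with the weights `1/r`, `1/p - 1/r`, `1/q - 1/r`, applied to the factorization
-- `a g = (a^p g^q)^(1/r) (a^p)^(1/p - 1/r) (g^q)^(1/q - 1/r)`.
lemma tsum_mul_le_of_inv_add_inv (hp : 0 < p) (hq : 0 < q) (hpr : p ≤ r) (hqr : q ≤ r)
    (hpqr : p⁻¹ + q⁻¹ = 1 + r⁻¹) (a g : ι → ℝ≥0∞) :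
    ∑' i, a i * g i ≤ (∑' i, a i ^ p * g i ^ q) ^ r⁻¹ *
      ((∑' i, a i ^ p) ^ (p⁻¹ - r⁻¹) * (∑' i, g i ^ q) ^ (q⁻¹ - r⁻¹)) := by
  have hr : 0 ≤ r⁻¹ := inv_nonneg.2 (hp.le.trans hpr)
  have rpow_split {s : ℝ} (hs : 0 < s) (hsr : s ≤ r) (b : ℝ≥0∞) :
      (b ^ s) ^ r⁻¹ * (b ^ s) ^ (s⁻¹ - r⁻¹) = b := by
    rw [← ENNReal.rpow_add_of_nonneg _ _ hr (sub_nonneg.2 (inv_anti₀ hs hsr)), add_sub_cancel,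
      ENNReal.rpow_rpow_inv hs.ne']
  have factorization (i : ι) : (a i ^ p * g i ^ q) ^ r⁻¹ *
      ((a i ^ p) ^ (p⁻¹ - r⁻¹) * (g i ^ q) ^ (q⁻¹ - r⁻¹)) = a i * g i := by
    rw [ENNReal.mul_rpow_of_nonneg _ _ hr, mul_mul_mul_comm, rpow_split hp hpr, rpow_split hq hqr]
  have weights_sum : r⁻¹ + (p⁻¹ - r⁻¹) + (q⁻¹ - r⁻¹) = 1 := by linarith
  have holder := tsum_prod_rpow_le Finset.univ (w := ![r⁻¹, p⁻¹ - r⁻¹, q⁻¹ - r⁻¹])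
    (by simpa [Fin.sum_univ_three] using weights_sum)
    (by simp [Fin.forall_fin_succ, hr, inv_anti₀ hp hpr, inv_anti₀ hq hqr])
    ![fun i => a i ^ p * g i ^ q, fun i => a i ^ p, fun i => g i ^ q]
  simpa [Fin.prod_univ_three, mul_assoc, factorization] using holder

lemma rpow_tsum_mul_le_of_inv_add_inv (hp : 0 < p) (hq : 0 < q) (hpr : p ≤ r) (hqr : q ≤ r)
    (hpqr : p⁻¹ + q⁻¹ = 1 + r⁻¹) (a g : ι → ℝ≥0∞) :
    (∑' i, a i * g i) ^ r ≤
      (∑' i, a i ^ p * g i ^ q) * (eellNorm p a ^ (r - p) * eellNorm q g ^ (r - q)) := by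
  have hr : 0 < r := hp.trans_le hpr
  have exponent {s : ℝ} (hs : 0 < s) : s * ((s⁻¹ - r⁻¹) * r) = r - s := by field_simp
  have hbase := tsum_mul_le_of_inv_add_inv hp hq hpr hqr hpqr a g
  refine (ENNReal.rpow_le_rpow hbase hr.le).trans_eq ?_
  rw [ENNReal.mul_rpow_of_nonneg _ _ hr.le, ENNReal.mul_rpow_of_nonneg _ _ hr.le,
    ENNReal.rpow_inv_rpow hr.ne', ← eellNorm_rpow hp.ne', ← eellNorm_rpow hq.ne']
  simp only [← ENNReal.rpow_mul, mul_assoc, exponent hp, exponent hq]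

-- Young's convolution inequality, with the translates of one function replaced by the rows and
-- columns of a kernel.
theorem eellNorm_tsum_mul_le_of_inv_add_inv (hp : 0 < p) (hq : 0 < q) (hpr : p ≤ r) (hqr : q ≤ r)
    (hpqr : p⁻¹ + q⁻¹ = 1 + r⁻¹) {K : ι → κ → ℝ≥0∞} {C : ℝ≥0∞}
    (hrow : ∀ i, eellNorm p (K i) ≤ C) (hcol : ∀ j, eellNorm p (fun i => K i j) ≤ C)
    (g : κ → ℝ≥0∞) :
    eellNorm r (fun i => ∑' j, K i j * g j) ≤ C * eellNorm q g := by
  have hr : 0 < r := hp.trans_le hpr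
  set N := eellNorm q g
  have pointwise (i : ι) : (∑' j, K i j * g j) ^ r ≤
      (∑' j, K i j ^ p * g j ^ q) * (C ^ (r - p) * N ^ (r - q)) := by
    refine (rpow_tsum_mul_le_of_inv_add_inv hp hq hpr hqr hpqr (K i) g).trans ?_
    gcongr
    exact hrow i
  have double_sum : ∑' i, ∑' j, K i j ^ p * g j ^ q ≤ C ^ p * N ^ q := by
    rw [ENNReal.tsum_comm, eellNorm_rpow hq.ne', ← ENNReal.tsum_mul_left]
    simp only [ENNReal.tsum_mul_right]
    gcongr with j
    exact (eellNorm_le_iff hp).1 (hcol j)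
  have rpow_split {s : ℝ} (hs : 0 < s) (hsr : s ≤ r) (b : ℝ≥0∞) : b ^ s * b ^ (r - s) = b ^ r := by
    rw [← ENNReal.rpow_add_of_nonneg _ _ hs.le (sub_nonneg.2 hsr), add_sub_cancel]
  rw [eellNorm_le_iff hr]
  calc ∑' i, (∑' j, K i j * g j) ^ r
      ≤ ∑' i, (∑' j, K i j ^ p * g j ^ q) * (C ^ (r - p) * N ^ (r - q)) :=
        ENNReal.tsum_le_tsum pointwise
    _ ≤ C ^ p * N ^ q * (C ^ (r - p) * N ^ (r - q)) := by
        rw [ENNReal.tsum_mul_right]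
        gcongr
    _ = (C * N) ^ r := by
        rw [mul_mul_mul_comm, rpow_split hp hpr, rpow_split hq hqr,
          ENNReal.mul_rpow_of_nonneg _ _ hr.le]

end ENNRealNorm

/-- The `ℓ^p` norm of a real family over an arbitrary index type, the common form of `normFull`,
`normPunct` and `norm0`; it is `0` for a family that is not `p`-summable. -/
def ellNorm {ι : Type*} (p : ℝ) (f : ι → ℝ) : ℝ := (∑' i, |f i| ^ p) ^ (1 / p)

section RealNorm

variable {ι : Type*} {p q : ℝ} {d : ℕ}

lemma ellNorm_nonneg (p : ℝ) (f : ι → ℝ) : 0 ≤ ellNorm p f :=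
  Real.rpow_nonneg (tsum_nonneg fun _ => by positivity) _

lemma ofReal_ellNorm (hp : 0 ≤ p) {f : ι → ℝ} (hf : Summable fun i => |f i| ^ p) :
    ENNReal.ofReal (ellNorm p f) = eellNorm p fun i => ‖f i‖ₑ := by
  have hterm (i : ι) : 0 ≤ |f i| ^ p := by positivity
  rw [ellNorm, eellNorm, ← ENNReal.ofReal_rpow_of_nonneg (tsum_nonneg hterm) (one_div_nonneg.2 hp),
    ENNReal.ofReal_tsum_of_nonneg hterm hf]
  simp only [Real.enorm_eq_ofReal_abs, ENNReal.ofReal_rpow_of_nonneg (abs_nonneg _) hp]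

lemma summable_abs_rpow_of_le (hp : 0 < p) (hpq : p ≤ q) {f : ι → ℝ}
    (hf : Summable fun i => |f i| ^ p) : Summable fun i => |f i| ^ q := by
  have hq : 0 < q := hp.trans_le hpq
  have hmem : Memℓp f (ENNReal.ofReal p) :=
    memℓp_gen (by simpa only [ENNReal.toReal_ofReal hp.le, Real.norm_eq_abs] using hf)
  simpa only [ENNReal.toReal_ofReal hq.le, Real.norm_eq_abs] using
    (hmem.of_exponent_ge (ENNReal.ofReal_le_ofReal hpq)).summable
      (by rwa [ENNReal.toReal_ofReal hq.le])

lemma tsum_mul_pow_nonneg {f y : ι → ℝ} (hf : ∀ i, 0 ≤ f i) (hy : ∀ i, 0 ≤ y i) :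
    0 ≤ ∑' i, f i * y i ^ d :=
  tsum_nonneg fun i => mul_nonneg (hf i) (pow_nonneg (hy i) d)

lemma enorm_tsum_mul_pow_le (d : ℕ) (f y : ι → ℝ) :
    ‖∑' i, f i * y i ^ d‖ₑ ≤ ∑' i, ‖f i‖ₑ * ‖y i‖ₑ ^ d := by
  simpa only [enorm_mul, enorm_pow] using enorm_tsum_le_tsum_enorm (f := fun i => f i * y i ^ d)

lemma tsum_mul_pow_le_ellNorm_mul_ellNorm_pow (hd : d ≠ 0) {f y : ι → ℝ}
    (hf : Summable fun i => |f i| ^ ((d : ℝ) + 1)) (hy : Summable fun i => |y i| ^ ((d : ℝ) + 1)) :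
    ∑' i, f i * y i ^ d ≤ ellNorm ((d : ℝ) + 1) f * ellNorm ((d : ℝ) + 1) y ^ d := by
  have hd₀ : (0 : ℝ) < d := by positivity
  have hconj : ((d : ℝ) + 1).HolderConjugate (((d : ℝ) + 1) / d) :=
    Real.holderConjugate_iff.2 ⟨by linarith, by field_simp; ring⟩
  refine (ENNReal.ofReal_le_ofReal_iff
    (mul_nonneg (ellNorm_nonneg _ f) (pow_nonneg (ellNorm_nonneg _ y) d))).1 ?_
  calc ENNReal.ofReal (∑' i, f i * y i ^ d)
      ≤ ‖∑' i, f i * y i ^ d‖ₑ := Real.ofReal_le_enorm _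
    _ ≤ ∑' i, ‖f i‖ₑ * ‖y i‖ₑ ^ d := enorm_tsum_mul_pow_le d f y
    _ ≤ eellNorm ((d : ℝ) + 1) (fun i => ‖f i‖ₑ) *
          eellNorm ((d : ℝ) + 1) (fun i => ‖y i‖ₑ) ^ d := by
        simpa only [eellNorm_pow hd, mul_div_cancel₀ _ hd₀.ne'] using
          tsum_mul_le_eellNorm_mul_eellNorm hconj (fun i => ‖f i‖ₑ) fun i => ‖y i‖ₑ ^ d
    _ = ENNReal.ofReal (ellNorm ((d : ℝ) + 1) f * ellNorm ((d : ℝ) + 1) y ^ d) := by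
        rw [ENNReal.ofReal_mul (ellNorm_nonneg _ f), ENNReal.ofReal_pow (ellNorm_nonneg _ y),
          ofReal_ellNorm (by positivity) hf, ofReal_ellNorm (by positivity) hy]

end RealNorm

/-- `G ∖ {0}`, the common form of the index types `ZkP k`. -/
abbrev Punctured (G : Type*) [Zero G] := {j : G // j ≠ 0}

/-- The operator `T` over an arbitrary additive group in place of `ℤ^k`. -/
def groupOpT {G : Type*} [AddGroup G] (d : ℕ) (Q : G → ℝ) (x : Punctured G → ℝ) (i : G) : ℝ :=
  (Q i + ∑' j : Punctured G, Q (i - j) * x j ^ d) /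
    (1 + ∑' j : Punctured G, Q j * x j ^ d)

section FixedPoint

variable {G : Type*} [AddGroup G] {d : ℕ} {Q : G → ℝ} {x : Punctured G → ℝ}

lemma eellNorm_conv_pow_le (hd : d ≠ 0) (q : G → ℝ≥0∞) (y : Punctured G → ℝ≥0∞) :
    eellNorm ((d : ℝ) + 1) (fun i : Punctured G => ∑' j : Punctured G, q (i - j) * y j ^ d) ≤
      eellNorm (((d : ℝ) + 1) / 2) q * eellNorm ((d : ℝ) + 1) y ^ d := by
  have hd₁ : (1 : ℝ) ≤ d := Nat.one_le_cast.2 (Nat.one_le_iff_ne_zero.2 hd)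
  have young := eellNorm_tsum_mul_le_of_inv_add_inv (p := ((d : ℝ) + 1) / 2)
    (q := ((d : ℝ) + 1) / d) (r := (d : ℝ) + 1) (by positivity) (by positivity)
    (half_le_self (by positivity)) (div_le_self (by positivity) hd₁) (by field_simp; ring)
    (K := fun i j : Punctured G => q (i - j))
    (fun i => eellNorm_comp_le_of_injective (by positivity)
      (sub_right_injective.comp Subtype.val_injective) q)
    (fun j => eellNorm_comp_le_of_injective (by positivity)
      (sub_left_injective.comp Subtype.val_injective) q)
    (fun j => y j ^ d)
  rwa [eellNorm_pow hd, mul_div_cancel₀ _ (by positivity)] at young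

lemma one_add_tsum_mul_eq_of_groupOpT_eq (hQ : ∀ j, 0 ≤ Q j) (hx : ∀ j, 0 ≤ x j)
    {i : Punctured G} (hfix : groupOpT d Q x i = x i) :
    (1 + ∑' j : Punctured G, Q j * x j ^ d) * x i =
      Q i + ∑' j : Punctured G, Q (i - j) * x j ^ d := by
  have hden : 0 ≤ ∑' j : Punctured G, Q j * x j ^ d := tsum_mul_pow_nonneg (fun _ => hQ _) hx
  rw [← hfix, groupOpT, mul_div_cancel₀ _ (by positivity)]

lemma ellNorm_le_of_groupOpT_eq (hd : d ≠ 0) (hQ : ∀ j, 0 ≤ Q j)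
    (hQsum : Summable fun j => |Q j| ^ (((d : ℝ) + 1) / 2))
    (hQsum' : Summable fun j : Punctured G => |Q j| ^ ((d : ℝ) + 1))
    (hx : ∀ j, 0 ≤ x j) (hxsum : Summable fun j => |x j| ^ ((d : ℝ) + 1))
    (hfix : ∀ i : Punctured G, groupOpT d Q x i = x i) :
    ellNorm ((d : ℝ) + 1) x ≤ ellNorm ((d : ℝ) + 1) (fun j : Punctured G => Q j) +
      ellNorm (((d : ℝ) + 1) / 2) Q * ellNorm ((d : ℝ) + 1) x ^ d := by
  have hxn := ellNorm_nonneg ((d : ℝ) + 1) x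
  have hγ := ellNorm_nonneg (((d : ℝ) + 1) / 2) Q
  have hδ := ellNorm_nonneg ((d : ℝ) + 1) fun j : Punctured G => Q j
  have pointwise (i : Punctured G) :
      ‖x i‖ₑ ≤ ‖Q i‖ₑ + ∑' j : Punctured G, ‖Q (i - j)‖ₑ * ‖x j‖ₑ ^ d := by
    have hle : x i ≤ Q i + ∑' j : Punctured G, Q (i - j) * x j ^ d := by
      rw [← one_add_tsum_mul_eq_of_groupOpT_eq hQ hx (hfix i)]
      exact le_mul_of_one_le_left (hx i)
        (le_add_of_nonneg_right (tsum_mul_pow_nonneg (fun _ => hQ _) hx))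
    calc ‖x i‖ₑ ≤ ‖Q i + ∑' j : Punctured G, Q (i - j) * x j ^ d‖ₑ :=
          enorm_le_iff_norm_le.2 (abs_le_abs_of_nonneg (hx i) hle)
      _ ≤ ‖Q i‖ₑ + ‖∑' j : Punctured G, Q (i - j) * x j ^ d‖ₑ := enorm_add_le _ _
      _ ≤ ‖Q i‖ₑ + ∑' j : Punctured G, ‖Q (i - j)‖ₑ * ‖x j‖ₑ ^ d := by
          gcongr
          exact enorm_tsum_mul_pow_le d (fun j : Punctured G => Q (i - j)) x
  refine (ENNReal.ofReal_le_ofReal_iff (by positivity)).1 ?_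
  rw [ENNReal.ofReal_add hδ (by positivity), ENNReal.ofReal_mul hγ, ENNReal.ofReal_pow hxn,
    ofReal_ellNorm (by positivity) hxsum, ofReal_ellNorm (by positivity) hQsum,
    ofReal_ellNorm (by positivity) hQsum']
  calc eellNorm ((d : ℝ) + 1) (fun i => ‖x i‖ₑ)
      ≤ eellNorm ((d : ℝ) + 1) (fun i : Punctured G =>
          ‖Q i‖ₑ + ∑' j : Punctured G, ‖Q (i - j)‖ₑ * ‖x j‖ₑ ^ d) :=
        eellNorm_mono (by positivity) pointwise
    _ ≤ _ := (eellNorm_add_le (by simp) _ _).trans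
        (add_le_add_right (eellNorm_conv_pow_le hd (fun j => ‖Q j‖ₑ) fun j => ‖x j‖ₑ) _)

lemma ellNorm_le_mul_ellNorm_of_groupOpT_eq (hd : d ≠ 0) (hQ : ∀ j, 0 ≤ Q j)
    (hQsum : Summable fun j : Punctured G => |Q j| ^ ((d : ℝ) + 1))
    (hx : ∀ j, 0 ≤ x j) (hxsum : Summable fun j => |x j| ^ ((d : ℝ) + 1))
    (hfix : ∀ i : Punctured G, groupOpT d Q x i = x i) :
    ellNorm ((d : ℝ) + 1) (fun j : Punctured G => Q j) ≤
      (1 + ellNorm ((d : ℝ) + 1) (fun j : Punctured G => Q j) *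
        ellNorm ((d : ℝ) + 1) x ^ d) * ellNorm ((d : ℝ) + 1) x := by
  have hxn := ellNorm_nonneg ((d : ℝ) + 1) x
  set A := ∑' j : Punctured G, Q j * x j ^ d
  have hA : 0 ≤ A := tsum_mul_pow_nonneg (fun _ => hQ _) hx
  have pointwise (i : Punctured G) : ‖Q i‖ₑ ≤ ‖1 + A‖ₑ * ‖x i‖ₑ := by
    rw [← enorm_mul, one_add_tsum_mul_eq_of_groupOpT_eq hQ hx (hfix i)]
    exact enorm_le_iff_norm_le.2 (abs_le_abs_of_nonneg (hQ i)
      (le_add_of_nonneg_right (tsum_mul_pow_nonneg (fun _ => hQ _) hx)))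
  have hδ : ellNorm ((d : ℝ) + 1) (fun j : Punctured G => Q j) ≤
      (1 + A) * ellNorm ((d : ℝ) + 1) x := by
    refine (ENNReal.ofReal_le_ofReal_iff (by positivity)).1 ?_
    rw [ENNReal.ofReal_mul (by positivity), ← Real.enorm_of_nonneg (by positivity : 0 ≤ 1 + A),
      ofReal_ellNorm (by positivity) hxsum, ofReal_ellNorm (by positivity) hQsum,
      ← eellNorm_const_mul (by positivity)]
    exact eellNorm_mono (by positivity) pointwise
  refine hδ.trans ?_
  gcongr
  exact tsum_mul_pow_le_ellNorm_mul_ellNorm_pow hd hQsum hxsum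

end FixedPoint

/-- `ε` witnesses that `(γ, δ)` lies in the good set `G_d`. -/
structure IsGoodWitness (d : ℕ) (γ δ ε : ℝ) : Prop where
  pos : 0 < ε
  add_mul_pow_le : δ + γ * ε ^ d ≤ ε
  contracting : 2 * d * γ * ε ^ (d - 1) + 2 * d * δ * ε ^ d < 1

section ScalarEquation

variable {d : ℕ} {γ δ ε e X : ℝ}

lemma strictMonoOn_sub_mul_pow (hγ : 0 ≤ γ) (h : d * γ * ε ^ (d - 1) < 1) :
    StrictMonoOn (fun e => e - γ * e ^ d) (Set.Icc 0 ε) := by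
  refine strictMonoOn_of_deriv_pos (convex_Icc 0 ε) (by fun_prop) fun e he => ?_
  rw [interior_Icc] at he
  have hderiv : HasDerivAt (fun e => e - γ * e ^ d) (1 - γ * (d * e ^ (d - 1))) e :=
    (hasDerivAt_id e).sub ((hasDerivAt_pow d e).const_mul γ)
  rw [hderiv.deriv, sub_pos]
  calc γ * (d * e ^ (d - 1)) ≤ γ * (d * ε ^ (d - 1)) := by
        have := he.1.le
        have := he.2.le
        gcongr
    _ = d * γ * ε ^ (d - 1) := by ring
    _ < 1 := h

lemma exists_mul_pow_add_eq (hd : d ≠ 0) (hδ : 0 < δ) (hε : 0 ≤ ε) (h : δ + γ * ε ^ d ≤ ε) :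
    ∃ e, 0 < e ∧ e ≤ ε ∧ γ * e ^ d + δ = e := by
  have hcont : ContinuousOn (fun e => e - γ * e ^ d) (Set.Icc 0 ε) := by fun_prop
  have hmem : δ ∈ Set.Ioc (0 - γ * 0 ^ d) (ε - γ * ε ^ d) :=
    ⟨by simpa only [zero_pow hd, mul_zero, sub_zero] using hδ, by linarith⟩
  obtain ⟨e, ⟨he₀, heε⟩, he⟩ := intermediate_value_Ioc hε hcont hmem
  exact ⟨e, he₀, heε, by linarith [show e - γ * e ^ d = δ from he]⟩

lemma mul_one_sub_mul_pow_pred_eq (hd : d ≠ 0) (he : γ * e ^ d + δ = e) :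
    e * (1 - γ * e ^ (d - 1)) = δ := by
  rw [← mul_pow_sub_one hd] at he
  linarith

lemma mul_pow_pred_lt_one_of_mul_pow_add_eq (hd : d ≠ 0) (hδ : 0 < δ) (he₀ : 0 < e)
    (he : γ * e ^ d + δ = e) : γ * e ^ (d - 1) < 1 := by
  rw [← mul_one_sub_mul_pow_pred_eq hd he] at hδ
  exact sub_pos.1 ((mul_pos_iff_of_pos_left he₀).1 hδ)

namespace IsGoodWitness

lemma natCast_mul_mul_pow_pred_lt_one (h : IsGoodWitness d γ δ ε) (hγ : 0 ≤ γ) (hδ : 0 ≤ δ) :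
    d * γ * ε ^ (d - 1) < 1 := by
  have := h.pos
  have : 0 ≤ d * γ * ε ^ (d - 1) := by positivity
  have : 0 ≤ d * δ * ε ^ d := by positivity
  linarith [h.contracting]

lemma mul_pow_le_one (h : IsGoodWitness d γ δ ε) (hd : d ≠ 0) (hγ : 0 ≤ γ) (hδ : 0 ≤ δ) :
    δ * ε ^ d ≤ 1 := by
  have hε := h.pos
  have hd₁ : (1 : ℝ) ≤ d := Nat.one_le_cast.2 (Nat.one_le_iff_ne_zero.2 hd)
  have : 0 ≤ d * γ * ε ^ (d - 1) := by positivity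
  have : δ * ε ^ d ≤ d * (δ * ε ^ d) := le_mul_of_one_le_left (by positivity) hd₁
  linarith [h.contracting, show 0 ≤ δ * ε ^ d by positivity]

lemma le_of_le_mul_pow_add (h : IsGoodWitness d γ δ ε) (hγ : 0 ≤ γ) (hδ : 0 ≤ δ)
    (he₀ : 0 ≤ e) (heε : e ≤ ε) (he : γ * e ^ d + δ = e)
    (hX₀ : 0 ≤ X) (hXε : X ≤ ε) (hX : X ≤ δ + γ * X ^ d) : X ≤ e :=
  ((strictMonoOn_sub_mul_pow hγ (h.natCast_mul_mul_pow_pred_lt_one hγ hδ)).le_iff_le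
    ⟨hX₀, hXε⟩ ⟨he₀, heε⟩).1 (by linarith)

lemma exists_isLeast (h : IsGoodWitness d γ δ ε) (hd : d ≠ 0) (hγ : 0 ≤ γ) (hδ : 0 < δ) :
    ∃ e, IsLeast {e | 0 < e ∧ γ * e ^ d + δ = e} e := by
  obtain ⟨e, he₀, heε, he⟩ := exists_mul_pow_add_eq hd hδ h.pos.le h.add_mul_pow_le
  refine ⟨e, ⟨he₀, he⟩, fun e' ⟨he'₀, he'⟩ => ?_⟩
  by_contra! hlt
  exact hlt.not_ge <|
    h.le_of_le_mul_pow_add hγ hδ.le he'₀.le (hlt.le.trans heε) he' he₀.le heε (by linarith)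

lemma le_of_isLeast (h : IsGoodWitness d γ δ ε) (hd : d ≠ 0) (hδ : 0 < δ)
    (he : IsLeast {e | 0 < e ∧ γ * e ^ d + δ = e} e) : e ≤ ε := by
  obtain ⟨e', he'₀, he'ε, he'⟩ := exists_mul_pow_add_eq hd hδ h.pos.le h.add_mul_pow_le
  exact (he.2 ⟨he'₀, he'⟩).trans he'ε

end IsGoodWitness

lemma mul_one_sub_div_le (hγ : 0 ≤ γ) (hδ : 0 ≤ δ) (he : δ * e ^ d ≤ 1) (hX₀ : 0 ≤ X)
    (hXe : X ≤ e) (hX : δ ≤ (1 + δ * X ^ d) * X) :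
    δ * (1 - δ * e ^ d) / (1 + γ * e ^ (d - 1)) ≤ X := by
  have he₀ : 0 ≤ e := hX₀.trans hXe
  have hsub : 0 ≤ 1 - δ * e ^ d := sub_nonneg.2 he
  calc δ * (1 - δ * e ^ d) / (1 + γ * e ^ (d - 1)) ≤ δ * (1 - δ * e ^ d) :=
        div_le_self (by positivity) (le_add_of_nonneg_right (by positivity))
    _ ≤ (1 + δ * e ^ d) * X * (1 - δ * e ^ d) := by
        refine mul_le_mul_of_nonneg_right (hX.trans ?_) hsub
        gcongr
    _ = (1 - (δ * e ^ d) ^ 2) * X := by ring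
    _ ≤ X := mul_le_of_le_one_left hX₀ (sub_le_self 1 (sq_nonneg _))

lemma le_mul_one_add_div (hd : d ≠ 0) (hδ : 0 < δ) (he₀ : 0 < e) (he : γ * e ^ d + δ = e) :
    e ≤ δ * (1 + δ * e ^ d) / (1 - γ * e ^ (d - 1)) := by
  rw [le_div_iff₀ (sub_pos.2 (mul_pow_pred_lt_one_of_mul_pow_add_eq hd hδ he₀ he)),
    mul_one_sub_mul_pow_pred_eq hd he]
  exact le_mul_of_one_le_right hδ.le (le_add_of_nonneg_right (by positivity))

end ScalarEquation

theorem stmt6_general {G : Type*} [AddGroup G] {d : ℕ} (hd : d ≠ 0) {Q : G → ℝ}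
    (hQ : ∀ j, 0 ≤ Q j) (hQsum : Summable fun j => |Q j| ^ (((d : ℝ) + 1) / 2)) {γ δ : ℝ}
    (hγ : γ = ellNorm (((d : ℝ) + 1) / 2) Q)
    (hδ : δ = ellNorm ((d : ℝ) + 1) fun j : Punctured G => Q j)
    (hδ₀ : 0 < δ) (hgood : ∃ ε, IsGoodWitness d γ δ ε) :
    ∃ εs, IsLeast {e | 0 < e ∧ γ * e ^ d + δ = e} εs ∧ γ * εs ^ (d - 1) < 1 ∧
      ∀ ε, IsGoodWitness d γ δ ε → ∀ x : Punctured G → ℝ,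
        (Summable fun j => |x j| ^ ((d : ℝ) + 1)) → (∀ j, 0 ≤ x j) →
        ellNorm ((d : ℝ) + 1) x ≤ ε → (∀ i : Punctured G, groupOpT d Q x i = x i) →
          (δ * (1 - δ * εs ^ d) / (1 + γ * εs ^ (d - 1))) ^ (d + 1) ≤
              ellNorm ((d : ℝ) + 1) x ^ (d + 1) ∧
            ellNorm ((d : ℝ) + 1) x ^ (d + 1) ≤
              (δ * (1 + δ * εs ^ d) / (1 - γ * εs ^ (d - 1))) ^ (d + 1) := by
  have hγ₀ : 0 ≤ γ := hγ ▸ ellNorm_nonneg _ Q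
  have hQsum' : Summable fun j : Punctured G => |Q j| ^ ((d : ℝ) + 1) :=
    (summable_abs_rpow_of_le (by positivity) (half_le_self (by positivity)) hQsum).subtype _
  obtain ⟨ε₀, hε₀⟩ := hgood
  obtain ⟨εs, hleast⟩ := hε₀.exists_isLeast hd hγ₀ hδ₀
  obtain ⟨hεs₀, hεs⟩ := hleast.1
  refine ⟨εs, hleast, mul_pow_pred_lt_one_of_mul_pow_add_eq hd hδ₀ hεs₀ hεs,
    fun ε hε x hxsum hx hxε hfix => ?_⟩
  have hupper := ellNorm_le_of_groupOpT_eq hd hQ hQsum hQsum' hx hxsum hfix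
  have hlower := ellNorm_le_mul_ellNorm_of_groupOpT_eq hd hQ hQsum' hx hxsum hfix
  rw [← hγ, ← hδ] at hupper
  rw [← hδ] at hlower
  have hX₀ := ellNorm_nonneg ((d : ℝ) + 1) x
  have hεsε : εs ≤ ε := hε.le_of_isLeast hd hδ₀ hleast
  have hXεs := hε.le_of_le_mul_pow_add hγ₀ hδ₀.le hεs₀.le hεsε hεs hX₀ hxε hupper
  have hsmall : δ * εs ^ d ≤ 1 :=
    le_trans (by gcongr) (hε.mul_pow_le_one hd hγ₀ hδ₀.le)
  constructor
  · refine pow_le_pow_left₀ ?_ (mul_one_sub_div_le hγ₀ hδ₀.le hsmall hX₀ hXεs hlower) _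
    have := sub_nonneg.2 hsmall
    positivity
  · exact pow_le_pow_left₀ hX₀ (hXεs.trans (le_mul_one_add_div hd hδ₀ hεs₀ hεs)) _

/-- second part of Theorem 2.3: localization bounds for the fixed point.
If `(γ, δ) ∈ G_d`, the equation `ε = γε^d + δ` has a smallest positive solution `ε*`,
it satisfies `γ (ε*)^{d−1} < 1`, and the unique fixed point `x` of `T` in the ε-ball for a
good-set witness `ε` satisfies
`(δ(1−δ(ε*)^d)/(1+γ(ε*)^{d−1}))^{d+1} ≤ ‖x‖_{d+1}^{d+1} ≤ (δ(1+δ(ε*)^d)/(1−γ(ε*)^{d−1}))^{d+1}`. -/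
theorem stmt6 (k d : ℕ) (hk : 1 ≤ k) (hd : 2 ≤ d)
    (Q : ZkL k → ℝ) (hQpos : ∀ j, 0 < Q j) (hQ0 : Q 0 = 1)
    (hsum1 : Summable fun j : ZkL k => |Q j| ^ (((d : ℝ) + 1) / 2))
    (hsum2 : Summable fun j : ZkP k => |Q j.1| ^ ((d : ℝ) + 1))
    (hgood : (gam k d Q, del k d Q) ∈ goodSet d) :
    ∃ εs : ℝ, 0 < εs ∧ gam k d Q * εs ^ d + del k d Q = εs ∧
      (∀ ε' : ℝ, 0 < ε' → gam k d Q * ε' ^ d + del k d Q = ε' → εs ≤ ε') ∧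
      gam k d Q * εs ^ (d - 1) < 1 ∧
      ∀ ε : ℝ, 0 < ε →
        del k d Q + gam k d Q * ε ^ d ≤ ε →
        2 * d * gam k d Q * ε ^ (d - 1) + 2 * d * del k d Q * ε ^ d < 1 →
        ∀ x : ZkP k → ℝ, memD k d x → norm0 k ((d : ℝ) + 1) x ≤ ε →
          (∀ i : ZkP k, opT k d Q x i.1 = x i) →
          (del k d Q * (1 - del k d Q * εs ^ d) / (1 + gam k d Q * εs ^ (d - 1))) ^ (d + 1)
              ≤ norm0 k ((d : ℝ) + 1) x ^ (d + 1) ∧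
            norm0 k ((d : ℝ) + 1) x ^ (d + 1) ≤
              (del k d Q * (1 + del k d Q * εs ^ d) /
                (1 - gam k d Q * εs ^ (d - 1))) ^ (d + 1) := by
  obtain ⟨-, hδ, ε₀, hε₀, hle, hlt⟩ := hgood
  obtain ⟨εs, ⟨⟨hpos, heq⟩, hleast⟩, hlt₁, hbounds⟩ := stmt6_general (by omega : d ≠ 0)
    (fun j => (hQpos j).le) hsum1 rfl rfl hδ ⟨ε₀, hε₀, hle, hlt⟩
  exact ⟨εs, hpos, heq, fun e he₀ he => hleast ⟨he₀, he⟩, hlt₁,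
    fun ε hε hle hlt x hx => hbounds ε ⟨hε, hle, hlt⟩ x hx.1 hx.2⟩
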